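/- Let Γ be a 3-crystallographic group and let G ≤ Γ be a subgroup that leaves invariant a line l in ℝ³ and acts cocompactly on l purely by translations (every element of G restricts to a translation of l). Then G is isomorphic to one of the following groups: ℤ; ℤ₂×ℤ; ℤ₃×ℤ; ℤ₃⋊_φℤ; ℤ₄×ℤ; ℤ₄⋊_φℤ; ℤ₆×ℤ; ℤ₆⋊_φℤ; D₂×ℤ; D₂⋊_φℤ with φ of order 2 in Out(D₂); D₃×ℤ; D₄×ℤ; D₄⋊_φℤ; D₆×ℤ; D₆⋊_φℤ — where in each semidirect product F⋊_φℤ the automorphism φ represents the nontrivial element (for D₂, an order-2 element) of the outer automorphism group Out(F) (for cyclic F, φ is inversion). -/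

import Mathlib

noncomputable section

/-- Euclidean `n`-space. -/
abbrev E (n : ℕ) := EuclideanSpace ℝ (Fin n)

/-- The isometry group of Euclidean `n`-space (which equals `O(n) ⋉ ℝⁿ`). -/
abbrev Isom (n : ℕ) := E n ≃ᵢ E n

/-- A subgroup of the isometry group of `ℝⁿ` is `n`-crystallographic if its action on `ℝⁿ`
is properly discontinuous and cocompact. -/
def IsCrystallographic {n : ℕ} (Γ : Subgroup (Isom n)) : Prop :=
  (∀ K L : Set (E n), IsCompact K → IsCompact L →
      {γ : Isom n | γ ∈ Γ ∧ (γ '' K ∩ L).Nonempty}.Finite) ∧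
  ∃ K : Set (E n), IsCompact K ∧ ∀ x : E n, ∃ γ ∈ Γ, γ x ∈ K

/-- A line in `ℝⁿ`: a one-dimensional affine subspace. -/
def IsLine {n : ℕ} (l : Set (E n)) : Prop :=
  ∃ p v : E n, v ≠ 0 ∧ l = {x | ∃ t : ℝ, x = p + t • v}

/-- A group is virtually infinite cyclic if it contains an infinite cyclic subgroup of
finite index. -/
def IsVirtuallyInfiniteCyclic (G : Type*) [Group G] : Prop :=
  ∃ H : Subgroup G, H.FiniteIndex ∧ Nonempty (H ≃* Multiplicative ℤ)

/-- The cyclic group of order `i`. -/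
abbrev Zc (i : ℕ) := Multiplicative (ZMod i)

/-- The semidirect product `F ⋊_ψ ℤ` in which the generator of `ℤ` acts on `F` by the
automorphism `ψ`. -/
abbrev SdZ (F : Type) [Group F] (ψ : MulAut F) : Type :=
  F ⋊[zpowersHom (MulAut F) ψ] Multiplicative ℤ

/-- `ψ` is an inner automorphism. -/
def IsInner {F : Type} [Group F] (ψ : MulAut F) : Prop :=
  ∃ g : F, ψ = MulAut.conj g

section SemidirectRecognition

variable {G : Type*} [Group G]

/-- Conjugation by an element normalizing the range of an injective homomorphism `i : M →* G`
induces an automorphism of `M`. -/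
theorem exists_mulAut_of_normal_range {M : Type*} [Group M] (i : M →* G)
    (hi : Function.Injective i) (hn : i.range.Normal) (t : G) :
    ∃ ψ : MulAut M, ∀ m, t * i m * t⁻¹ = i (ψ m) := by
  let e : M ≃* i.range := MonoidHom.ofInjective hi
  refine ⟨(e.trans (MulAut.conjNormal t)).trans e.symm, fun m => ?_⟩
  have h : i (e.symm (MulAut.conjNormal t (e m))) = MulAut.conjNormal t (e m) := by
    rw [← MonoidHom.ofInjective_apply hi]
    exact congrArg Subtype.val (e.apply_symm_apply _)
  exact h.symm

theorem conj_zpow_eq_apply_zpow {M : Type*} [Group M] (i : M →* G) (t : G) (ψ : MulAut M)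
    (h : ∀ m, t * i m * t⁻¹ = i (ψ m)) (n : ℤ) (m : M) :
    t ^ n * i m * (t ^ n)⁻¹ = i ((ψ ^ n) m) := by
  induction n using Int.induction_on generalizing m with
  | zero => simp
  | succ n ih =>
    rw [zpow_add_one, zpow_add_one, MulAut.mul_apply, ← ih, ← h]
    group
  | pred n ih =>
    have h' : t⁻¹ * i m * t = i (ψ⁻¹ m) := by
      have := h (ψ⁻¹ m)
      rw [MulAut.apply_inv_self] at this
      rw [← this]
      group
    rw [zpow_sub_one, zpow_sub_one, MulAut.mul_apply, ← ih, ← h']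
    group

/-- A group with an infinite cyclic quotient is the semidirect product of the kernel and `ℤ`. -/
theorem nonempty_mulEquiv_sdZ {M : Type} [Group M] (τ : G →* Multiplicative ℤ) (i : M →* G)
    (hi : Function.Injective i) (hr : i.range = τ.ker) (t : G)
    (ht : τ t = Multiplicative.ofAdd 1) (ψ : MulAut M) (h : ∀ m, t * i m * t⁻¹ = i (ψ m)) :
    Nonempty (G ≃* SdZ M ψ) := by
  have hτi : ∀ m, τ (i m) = 1 := fun m => by
    rw [← MonoidHom.mem_ker, ← hr]
    exact ⟨m, rfl⟩
  have hτt : ∀ n : ℤ, τ (t ^ n) = Multiplicative.ofAdd n := fun n => by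
    rw [map_zpow, ht, ← ofAdd_zsmul, smul_eq_mul, mul_one]
  let L : SdZ M ψ →* G := SemidirectProduct.lift i (zpowersHom G t) (by
    intro n
    ext m
    have := conj_zpow_eq_apply_zpow i t ψ h n.toAdd m
    rw [← MulAut.conj_apply, map_zpow] at this
    simpa using this.symm)
  have hL : ∀ x : SdZ M ψ, L x = i x.left * t ^ x.right.toAdd := fun x => rfl
  refine ⟨(MulEquiv.ofBijective L ⟨?_, ?_⟩).symm⟩
  · rw [injective_iff_map_eq_one]
    intro x hx
    rw [hL] at hx
    have h1 : x.right = 1 := by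
      have := congrArg τ hx
      rw [map_mul, hτi, hτt, one_mul, map_one] at this
      exact this
    rw [h1] at hx
    have h2 : x.left = 1 := hi (by simpa using hx)
    exact SemidirectProduct.ext h2 h1
  · intro g
    have : g * (t ^ (τ g).toAdd)⁻¹ ∈ i.range := by
      rw [hr, MonoidHom.mem_ker, map_mul, map_inv, hτt]
      simp
    obtain ⟨m, hm⟩ := this
    refine ⟨⟨m, τ g⟩, ?_⟩
    rw [hL]
    change i m * t ^ (τ g).toAdd = g
    rw [hm]
    group

theorem nonempty_mulEquiv_prod {M : Type} [Group M] (τ : G →* Multiplicative ℤ) (i : M →* G)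
    (hi : Function.Injective i) (hr : i.range = τ.ker) (t : G)
    (ht : τ t = Multiplicative.ofAdd 1) (h : ∀ m, t * i m * t⁻¹ = i m) :
    Nonempty (G ≃* (M × Multiplicative ℤ)) := by
  obtain ⟨e⟩ := nonempty_mulEquiv_sdZ τ i hi hr t ht 1 h
  have h1 : zpowersHom (MulAut M) 1 = 1 := by
    ext
    simp
  unfold SdZ at e
  rw [h1] at e
  exact ⟨e.trans SemidirectProduct.mulEquivProd⟩

theorem nonempty_mulEquiv_prod_of_isInner {M : Type} [Group M] (τ : G →* Multiplicative ℤ)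
    (i : M →* G) (hi : Function.Injective i) (hr : i.range = τ.ker) (t : G)
    (ht : τ t = Multiplicative.ofAdd 1) (ψ : MulAut M) (h : ∀ m, t * i m * t⁻¹ = i (ψ m))
    (hψ : IsInner ψ) : Nonempty (G ≃* (M × Multiplicative ℤ)) := by
  obtain ⟨f, rfl⟩ := hψ
  have hf : τ (i f) = 1 := by
    rw [← MonoidHom.mem_ker, ← hr]
    exact ⟨f, rfl⟩
  refine nonempty_mulEquiv_prod τ i hi hr ((i f)⁻¹ * t) (by simp [hf, ht]) fun m => ?_
  have := h m
  rw [MulAut.conj_apply, map_mul, map_mul, map_inv] at this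
  calc (i f)⁻¹ * t * i m * ((i f)⁻¹ * t)⁻¹ = (i f)⁻¹ * (t * i m * t⁻¹) * i f := by group
    _ = i m := by rw [this]; group

end SemidirectRecognition

section Automorphisms

theorem zmod_mulAut_eq_one_or_inv {n : ℕ} (hn : ∀ x y : ZMod n, x * y = 1 → x = 1 ∨ x = -1)
    (ψ : MulAut (Zc n)) : ψ = 1 ∨ ψ = MulEquiv.inv (Zc n) := by
  let f : ZMod n →+ ZMod n := MonoidHom.toAdditive ψ.toMonoidHom
  let f' : ZMod n →+ ZMod n := MonoidHom.toAdditive (ψ⁻¹).toMonoidHom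
  have key : ∀ (g : ZMod n →+ ZMod n) (z : ZMod n), g z = g 1 * z := by
    intro g z
    obtain ⟨k, rfl⟩ := ZMod.intCast_surjective z
    rw [← zsmul_one, map_zsmul, zsmul_eq_mul, zsmul_eq_mul, mul_one, mul_comm]
  have h1 : f 1 * f' 1 = 1 := by
    rw [← key]
    exact MulAut.apply_inv_self _ ψ (Multiplicative.ofAdd 1)
  have hψ : ∀ z : ZMod n, ψ (Multiplicative.ofAdd z) = Multiplicative.ofAdd (f z) := fun _ => rfl
  refine (hn _ _ h1).imp (fun h => ?_) fun h => ?_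
  · refine MulEquiv.ext fun z => ?_
    rw [← ofAdd_toAdd z, hψ, key, h, one_mul, MulAut.one_apply]
  · refine MulEquiv.ext fun z => ?_
    rw [← ofAdd_toAdd z, hψ, key, h, neg_one_mul, ofAdd_neg]
    rfl

theorem dihedral_hom_ext {n : ℕ} {M : Type*} [Group M] {f g : DihedralGroup n →* M}
    (hr : f (.r 1) = g (.r 1)) (hs : f (.sr 0) = g (.sr 0)) : f = g := by
  have h : ∀ j : ZMod n, f (.r j) = g (.r j) := by
    intro j
    obtain ⟨k, rfl⟩ := ZMod.intCast_surjective j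
    rw [← DihedralGroup.r_one_zpow, map_zpow, map_zpow, hr]
  ext x
  cases x with
  | r j => exact h j
  | sr j =>
    have : (DihedralGroup.sr j : DihedralGroup n) = .sr 0 * .r j := by simp
    rw [this, map_mul, map_mul, hs, h]

theorem isInner_mulAut_dihedralGroup_three (ψ : MulAut (DihedralGroup 3)) : IsInner ψ := by
  have key : ∀ a b : DihedralGroup 3, a ≠ 1 → a ^ 3 = 1 → b ≠ 1 → b ^ 2 = 1 →
      ∃ g : DihedralGroup 3, a = g * .r 1 * g⁻¹ ∧ b = g * .sr 0 * g⁻¹ := by decide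
  obtain ⟨g, h1, h2⟩ := key (ψ (.r 1)) (ψ (.sr 0))
    (by rw [Ne, EmbeddingLike.map_eq_one_iff]; decide)
    (by rw [← map_pow, EmbeddingLike.map_eq_one_iff]; decide)
    (by rw [Ne, EmbeddingLike.map_eq_one_iff]; decide)
    (by rw [← map_pow, EmbeddingLike.map_eq_one_iff]; decide)
  refine ⟨g, MulEquiv.toMonoidHom_injective (dihedral_hom_ext h1 h2)⟩

theorem sq_eq_one_of_map_r_one (ψ : MulAut (DihedralGroup 2)) (h : ψ (.r 1) = .r 1) :
    ψ ^ 2 = 1 := by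
  have key : ∀ b : DihedralGroup 2, b ≠ 1 → b ≠ .r 1 → b = .sr 0 ∨ b = .sr 0 * .r 1 := by decide
  refine MulEquiv.toMonoidHom_injective (dihedral_hom_ext ?_ ?_)
  · change ψ (ψ (.r 1)) = .r 1
    rw [h, h]
  · change ψ (ψ (.sr 0)) = .sr 0
    obtain h0 | h0 := key (ψ (.sr 0)) (by rw [Ne, EmbeddingLike.map_eq_one_iff]; decide)
      (by rw [← h, Ne, EmbeddingLike.apply_eq_iff_eq]; decide)
    · rw [h0, h0]
    · rw [h0, map_mul, h, h0]
      decide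

end Automorphisms

section FiniteModels

variable {G : Type*} [Group G]

/-- The homomorphism from `ℤ/n` sending the generator to an element of order dividing `n`. -/
def zmodHom (n : ℕ) (g : G) (h : g ^ n = 1) : Zc n →* G :=
  AddMonoidHom.toMultiplicativeLeft (ZMod.lift n ⟨zmultiplesHom (Additive G) (Additive.ofMul g), by
    rw [zmultiplesHom_apply, natCast_zsmul, ← ofMul_pow, h, ofMul_one]⟩)

theorem zmodHom_intCast (n : ℕ) (g : G) (h : g ^ n = 1) (k : ℤ) :
    zmodHom n g h (Multiplicative.ofAdd (k : ZMod n)) = g ^ k := by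
  simp [zmodHom]

theorem exists_zc_hom {F : Subgroup G} {n : ℕ} {g : G} (hg : orderOf g = n)
    (hF : F = Subgroup.zpowers g) :
    ∃ i : Zc n →* G, Function.Injective i ∧ i.range = F := by
  have h : g ^ n = 1 := hg ▸ pow_orderOf_eq_one g
  refine ⟨zmodHom n g h, ?_, ?_⟩
  · rw [injective_iff_map_eq_one]
    intro z hz
    obtain ⟨k, hk⟩ := ZMod.intCast_surjective z.toAdd
    rw [← ofAdd_toAdd z, ← hk, zmodHom_intCast, ← orderOf_dvd_iff_zpow_eq_one, hg,
      ← CharP.intCast_eq_zero_iff (ZMod n), hk] at hz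
    exact hz
  · rw [hF]
    ext x
    rw [Subgroup.mem_zpowers_iff]
    constructor
    · rintro ⟨z, rfl⟩
      obtain ⟨k, hk⟩ := ZMod.intCast_surjective z.toAdd
      exact ⟨k, by rw [← zmodHom_intCast n g h, hk, ofAdd_toAdd]⟩
    · rintro ⟨k, rfl⟩
      exact ⟨_, zmodHom_intCast n g h k⟩

/-- The homomorphism from the dihedral group determined by a rotation and a reflection. -/
def dihedralHom (n : ℕ) (g s : G) (h : g ^ n = 1) (hs : s * s = 1) (hgs : s * g * s⁻¹ = g⁻¹) :
    DihedralGroup n →* G where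
  toFun
    | .r j => zmodHom n g h (Multiplicative.ofAdd j)
    | .sr j => s * zmodHom n g h (Multiplicative.ofAdd j)
  map_one' := map_one (zmodHom n g h)
  map_mul' := by
    have hc : ∀ j : ZMod n, zmodHom n g h (Multiplicative.ofAdd j) * s =
        s * zmodHom n g h (Multiplicative.ofAdd (-j)) := by
      intro j
      obtain ⟨k, rfl⟩ := ZMod.intCast_surjective j
      have h1 : s * g ^ (-k) * s⁻¹ = g ^ k := by
        rw [← conj_zpow, hgs, inv_zpow', neg_neg]
      rw [← Int.cast_neg, zmodHom_intCast, zmodHom_intCast, ← h1]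
      group
    rintro (a | a) (b | b)
    · exact (congrArg _ (ofAdd_add a b)).trans (map_mul _ _ _)
    · change s * zmodHom n g h (Multiplicative.ofAdd (b - a)) = zmodHom n g h _ * (s * _)
      rw [← mul_assoc, hc, mul_assoc, ← map_mul, ← ofAdd_add, neg_add_eq_sub]
    · change s * zmodHom n g h (Multiplicative.ofAdd (a + b)) = s * zmodHom n g h _ * _
      rw [mul_assoc, ← map_mul, ← ofAdd_add]
    · change zmodHom n g h (Multiplicative.ofAdd (b - a)) = s * zmodHom n g h _ * (s * _)
      rw [mul_assoc s, ← mul_assoc _ s, hc, ← mul_assoc, ← mul_assoc, hs, one_mul, ← map_mul,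
        ← ofAdd_add, neg_add_eq_sub]

theorem exists_dihedral_hom {F : Subgroup G} {n : ℕ} {g s : G} (hg : orderOf g = n)
    (hgF : g ∈ F) (hsF : s ∈ F) (hsg : s ∉ Subgroup.zpowers g) (hs : s * s = 1)
    (hgs : s * g * s⁻¹ = g⁻¹)
    (hF : ∀ x ∈ F, x ∈ Subgroup.zpowers g ∨ s * x ∈ Subgroup.zpowers g) :
    ∃ i : DihedralGroup n →* G, Function.Injective i ∧ i.range = F ∧ i (.r 1) = g := by
  have h : g ^ n = 1 := hg ▸ pow_orderOf_eq_one g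
  have hr : ∀ k : ℤ, dihedralHom n g s h hs hgs (.r k) = g ^ k := zmodHom_intCast n g h
  have hsr : ∀ k : ℤ, dihedralHom n g s h hs hgs (.sr k) = s * g ^ k := fun k =>
    congrArg (s * ·) (zmodHom_intCast n g h k)
  refine ⟨dihedralHom n g s h hs hgs, ?_, ?_, by simpa using hr 1⟩
  · rw [injective_iff_map_eq_one]
    rintro (j | j) hj <;> obtain ⟨k, rfl⟩ := ZMod.intCast_surjective j
    · rw [hr, ← orderOf_dvd_iff_zpow_eq_one, hg, ← CharP.intCast_eq_zero_iff (ZMod n)] at hj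
      rw [hj, DihedralGroup.r_zero]
    · rw [hsr] at hj
      exact absurd ⟨-k, (zpow_neg g k).trans (eq_inv_of_mul_eq_one_left hj).symm⟩ hsg
  · apply le_antisymm
    · rintro _ ⟨j | j, rfl⟩ <;> obtain ⟨k, rfl⟩ := ZMod.intCast_surjective j
      · rw [hr]
        exact F.zpow_mem hgF k
      · rw [hsr]
        exact F.mul_mem hsF (F.zpow_mem hgF k)
    · intro x hx
      obtain ⟨k, hk⟩ | ⟨k, hk⟩ := hF x hx
      · exact ⟨_, (hr k).trans hk⟩
      · refine ⟨_, (hsr k).trans ?_⟩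
        change g ^ k = s * x at hk
        rw [hk, ← mul_assoc, hs, one_mul]

end FiniteModels

section PlaneIsometries

open ComplexConjugate

theorem exists_conj_formula_of_notMem_range {f : ℂ ≃ₗᵢ[ℝ] ℂ} (hf : f ∉ rotation.range) :
    ∃ b : Circle, ∀ z, f z = b * conj z := by
  obtain ⟨b, rfl | rfl⟩ := linear_isometry_complex f
  · exact absurd ⟨b, rfl⟩ hf
  · exact ⟨b, fun z => rfl⟩

theorem mul_self_eq_one_of_notMem_range {f : ℂ ≃ₗᵢ[ℝ] ℂ} (hf : f ∉ rotation.range) :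
    f * f = 1 := by
  obtain ⟨b, hb⟩ := exists_conj_formula_of_notMem_range hf
  ext z
  change f (f z) = z
  rw [hb, hb, map_mul, Complex.conj_conj, ← mul_assoc, Complex.mul_conj, Circle.normSq_coe,
    Complex.ofReal_one, one_mul]

theorem mul_mem_range_of_notMem_range {f g : ℂ ≃ₗᵢ[ℝ] ℂ} (hf : f ∉ rotation.range)
    (hg : g ∉ rotation.range) : f * g ∈ rotation.range := by
  obtain ⟨b, hb⟩ := exists_conj_formula_of_notMem_range hf
  obtain ⟨c, hc⟩ := exists_conj_formula_of_notMem_range hg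
  refine ⟨b * c⁻¹, ?_⟩
  ext z
  change ((b * c⁻¹ : Circle) : ℂ) * z = f (g z)
  rw [hb, hc, map_mul (starRingEnd ℂ), Complex.conj_conj, Circle.coe_mul, Circle.coe_inv_eq_conj,
    mul_assoc]

theorem conj_rotation_of_notMem_range {f : ℂ ≃ₗᵢ[ℝ] ℂ} (hf : f ∉ rotation.range) (a : Circle) :
    f * rotation a * f⁻¹ = (rotation a)⁻¹ := by
  obtain ⟨b, hb⟩ := exists_conj_formula_of_notMem_range hf
  rw [mul_inv_eq_iff_eq_mul, ← map_inv]
  ext z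
  change f (a * z) = (a⁻¹ : Circle) * f z
  rw [hb, hb, map_mul, Circle.coe_inv_eq_conj]
  ring

instance rotation_range_normal : rotation.range.Normal where
  conj_mem := by
    rintro _ ⟨a, rfl⟩ f
    by_cases hf : f ∈ rotation.range
    · exact mul_mem (mul_mem hf ⟨a, rfl⟩) (inv_mem hf)
    · rw [conj_rotation_of_notMem_range hf]
      exact inv_mem ⟨a, rfl⟩

end PlaneIsometries

section KernelStructure

variable {G : Type*} [Group G]

/-- A finite group of linear isometries of the plane is cyclic, generated by a rotation, or
dihedral. -/
theorem finite_plane_subgroup_structure (F : Subgroup G) [F.Normal] [Finite F]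
    (ρ : G →* (ℂ ≃ₗᵢ[ℝ] ℂ)) (hρ : ∀ g ∈ F, ρ g = 1 → g = 1) :
    ∃ g ∈ F, ρ g ∈ rotation.range ∧ (∀ t : G, t * g * t⁻¹ ∈ Subgroup.zpowers g) ∧
      (F = Subgroup.zpowers g ∨ ∃ s ∈ F, s ∉ Subgroup.zpowers g ∧ s * s = 1 ∧
        s * g * s⁻¹ = g⁻¹ ∧ ∀ x ∈ F, x ∈ Subgroup.zpowers g ∨ s * x ∈ Subgroup.zpowers g) := by
  have hinj : ∀ x ∈ F, ∀ y ∈ F, ρ x = ρ y → x = y := by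
    intro x hx y hy h
    rw [← mul_inv_eq_one]
    exact hρ _ (mul_mem hx (inv_mem hy)) (by rw [map_mul, map_inv, h, mul_inv_cancel])
  let C : Subgroup Circle := (F.map ρ).comap rotation
  have : Finite C := by
    have h1 : Finite (F.map ρ) := inferInstanceAs (Finite (ρ '' (F : Set G)))
    exact Finite.of_injective (fun c : C => (⟨rotation c, c.2⟩ : F.map ρ))
      fun a b h => Subtype.ext (rotation_injective (congrArg Subtype.val h))
  have hC : IsCyclic C := isCyclic_of_injective_ringHom
    (Circle.coeHom.comp C.subtype) (Circle.coe_injective.comp Subtype.val_injective)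
  obtain ⟨⟨c, hc⟩, hgen⟩ := hC.exists_generator
  obtain ⟨g, hg, hgc⟩ := hc
  have hz : ∀ x ∈ F, ρ x ∈ rotation.range → x ∈ Subgroup.zpowers g := by
    rintro x hx ⟨a, ha⟩
    obtain ⟨k, hk⟩ := hgen ⟨a, x, hx, ha.symm⟩
    refine ⟨k, hinj _ (zpow_mem hg k) _ hx ?_⟩
    rw [map_zpow, hgc, ← ha, ← map_zpow]
    exact congrArg rotation (congrArg Subtype.val hk)
  have hzr : ∀ x ∈ Subgroup.zpowers g, ρ x ∈ rotation.range := by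
    rintro _ ⟨k, rfl⟩
    change ρ (g ^ k) ∈ _
    rw [map_zpow, hgc]
    exact zpow_mem (MonoidHom.mem_range.2 ⟨c, rfl⟩) k
  have hgr : ρ g ∈ rotation.range := MonoidHom.mem_range.2 ⟨c, hgc.symm⟩
  refine ⟨g, hg, hgr, fun t => hz _ (Subgroup.Normal.conj_mem inferInstance g hg t) ?_, ?_⟩
  · rw [map_mul, map_mul, map_inv]
    exact Subgroup.Normal.conj_mem rotation_range_normal (ρ g) hgr _
  by_cases hall : ∀ x ∈ F, ρ x ∈ rotation.range
  · exact .inl (le_antisymm (fun x hx => hz x hx (hall x hx)) (by simpa using hg))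
  · push Not at hall
    obtain ⟨s, hs, hsr⟩ := hall
    refine .inr ⟨s, hs, fun h => hsr (hzr s h), hinj _ (mul_mem hs hs) _ (one_mem F) ?_,
      hinj _ (mul_mem (mul_mem hs hg) (inv_mem hs)) _ (inv_mem hg) ?_, fun x hx => ?_⟩
    · rw [map_mul, mul_self_eq_one_of_notMem_range hsr, map_one]
    · rw [map_mul, map_mul, map_inv, map_inv, hgc, conj_rotation_of_notMem_range hsr]
    · by_cases hxr : ρ x ∈ rotation.range
      · exact .inl (hz x hx hxr)
      · refine .inr (hz _ (mul_mem hs hx) ?_)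
        rw [map_mul]
        exact mul_mem_range_of_notMem_range hsr hxr

theorem orderOf_mem_of_pow_eq_one {g : G} (h : g ^ 4 = 1 ∨ g ^ 6 = 1) :
    orderOf g = 1 ∨ orderOf g = 2 ∨ orderOf g = 3 ∨ orderOf g = 4 ∨ orderOf g = 6 := by
  rw [← orderOf_dvd_iff_pow_eq_one, ← orderOf_dvd_iff_pow_eq_one] at h
  have h6 : orderOf g ≤ 6 :=
    h.elim (fun h => (Nat.le_of_dvd (by norm_num) h).trans (by norm_num))
      (Nat.le_of_dvd (by norm_num))
  generalize orderOf g = n at h h6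
  interval_cases n <;> revert h <;> decide

theorem cyclic_extension_dichotomy (τ : G →* Multiplicative ℤ) {n : ℕ} {g : G}
    (hn : ∀ x y : ZMod n, x * y = 1 → x = 1 ∨ x = -1) (hg : orderOf g = n)
    (hker : τ.ker = Subgroup.zpowers g) (t : G) (ht : τ t = Multiplicative.ofAdd 1) :
    Nonempty (G ≃* (Zc n × Multiplicative ℤ)) ∨
      Nonempty (G ≃* SdZ (Zc n) (MulEquiv.inv (Zc n))) := by
  obtain ⟨i, hi, hr⟩ := exists_zc_hom hg hker
  obtain ⟨ψ, hψ⟩ := exists_mulAut_of_normal_range i hi (hr ▸ inferInstance) t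
  obtain rfl | rfl := zmod_mulAut_eq_one_or_inv hn ψ
  · exact .inl (nonempty_mulEquiv_prod τ i hi hr t ht hψ)
  · exact .inr (nonempty_mulEquiv_sdZ τ i hi hr t ht _ hψ)

theorem nonempty_mulEquiv_int_of_ker_eq_bot (τ : G →* Multiplicative ℤ) (hker : τ.ker = ⊥)
    (t : G) (ht : τ t = Multiplicative.ofAdd 1) : Nonempty (G ≃* Multiplicative ℤ) := by
  refine ⟨MulEquiv.ofBijective τ ⟨(MonoidHom.ker_eq_bot_iff τ).1 hker, fun z => ⟨t ^ z.toAdd, ?_⟩⟩⟩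
  rw [map_zpow, ht, ← ofAdd_zsmul, smul_eq_mul, mul_one, ofAdd_toAdd]

theorem inv_eq_one_mulAut_zc_two : (MulEquiv.inv (Zc 2) : MulAut (Zc 2)) = 1 := by
  refine MulEquiv.ext ?_
  decide

/-- The list of isomorphism types for an extension of `ℤ` by a finite group of linear isometries
of the plane satisfying the crystallographic restriction. -/
theorem extension_classification (τ : G →* Multiplicative ℤ) (t : G)
    (ht : τ t = Multiplicative.ofAdd 1) [Finite τ.ker] (ρ : G →* (ℂ ≃ₗᵢ[ℝ] ℂ))
    (hρ : ∀ g ∈ τ.ker, ρ g = 1 → g = 1)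
    (hcr : ∀ g ∈ τ.ker, ρ g ∈ rotation.range → ρ g ^ 4 = 1 ∨ ρ g ^ 6 = 1) :
    Nonempty (G ≃* Multiplicative ℤ) ∨
    Nonempty (G ≃* (Zc 2 × Multiplicative ℤ)) ∨
    Nonempty (G ≃* (Zc 3 × Multiplicative ℤ)) ∨
    Nonempty (G ≃* SdZ (Zc 3) (MulEquiv.inv (Zc 3))) ∨
    Nonempty (G ≃* (Zc 4 × Multiplicative ℤ)) ∨
    Nonempty (G ≃* SdZ (Zc 4) (MulEquiv.inv (Zc 4))) ∨
    Nonempty (G ≃* (Zc 6 × Multiplicative ℤ)) ∨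
    Nonempty (G ≃* SdZ (Zc 6) (MulEquiv.inv (Zc 6))) ∨
    Nonempty (G ≃* (DihedralGroup 2 × Multiplicative ℤ)) ∨
    (∃ ψ : MulAut (DihedralGroup 2), orderOf ψ = 2 ∧ Nonempty (G ≃* SdZ (DihedralGroup 2) ψ)) ∨
    Nonempty (G ≃* (DihedralGroup 3 × Multiplicative ℤ)) ∨
    Nonempty (G ≃* (DihedralGroup 4 × Multiplicative ℤ)) ∨
    (∃ ψ : MulAut (DihedralGroup 4), ¬ IsInner ψ ∧ Nonempty (G ≃* SdZ (DihedralGroup 4) ψ)) ∨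
    Nonempty (G ≃* (DihedralGroup 6 × Multiplicative ℤ)) ∨
    (∃ ψ : MulAut (DihedralGroup 6), ¬ IsInner ψ ∧ Nonempty (G ≃* SdZ (DihedralGroup 6) ψ)) := by
  obtain ⟨g, hg, hgr, hconj, hF⟩ := finite_plane_subgroup_structure τ.ker ρ hρ
  have hn := orderOf_mem_of_pow_eq_one ((hcr g hg hgr).imp
    (fun h => hρ _ (pow_mem hg 4) (by rw [map_pow, h]))
    (fun h => hρ _ (pow_mem hg 6) (by rw [map_pow, h])))
  have two : ∀ g : G, orderOf g = 2 → τ.ker = Subgroup.zpowers g →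
      Nonempty (G ≃* (Zc 2 × Multiplicative ℤ)) := by
    intro g hg hker
    obtain h | h := cyclic_extension_dichotomy τ (by decide) hg hker t ht
    · exact h
    · obtain ⟨i, hi, hr⟩ := exists_zc_hom hg hker
      obtain ⟨ψ, hψ⟩ := exists_mulAut_of_normal_range i hi (hr ▸ inferInstance) t
      obtain rfl | rfl := zmod_mulAut_eq_one_or_inv (by decide) ψ
      · exact nonempty_mulEquiv_prod τ i hi hr t ht hψ
      · exact nonempty_mulEquiv_prod τ i hi hr t ht (by rwa [inv_eq_one_mulAut_zc_two] at hψ)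
  obtain hF | ⟨s, hs, hsg, hss, hsgs, hF⟩ := hF
  · obtain h | h | h | h | h := hn
    · rw [orderOf_eq_one_iff.1 h, Subgroup.zpowers_one_eq_bot] at hF
      exact .inl (nonempty_mulEquiv_int_of_ker_eq_bot τ hF t ht)
    · have := two g h hF
      tauto
    · have := cyclic_extension_dichotomy τ (by decide) h hF t ht
      tauto
    · have := cyclic_extension_dichotomy τ (by decide) h hF t ht
      tauto
    · have := cyclic_extension_dichotomy τ (by decide) h hF t ht
      tauto
  · have dihedral : ∀ n, orderOf g = n → ∃ ψ : MulAut (DihedralGroup n),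
        ψ (.r 1) ∈ Subgroup.zpowers (DihedralGroup.r (1 : ZMod n)) ∧
        Nonempty (G ≃* SdZ (DihedralGroup n) ψ) ∧
        (IsInner ψ → Nonempty (G ≃* (DihedralGroup n × Multiplicative ℤ))) := by
      intro n h
      obtain ⟨i, hi, hr, hir⟩ := exists_dihedral_hom h hg hs hsg hss hsgs hF
      obtain ⟨ψ, hψ⟩ := exists_mulAut_of_normal_range i hi (hr ▸ inferInstance) t
      refine ⟨ψ, ?_, nonempty_mulEquiv_sdZ τ i hi hr t ht ψ hψ,
        nonempty_mulEquiv_prod_of_isInner τ i hi hr t ht ψ hψ⟩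
      obtain ⟨k, hk⟩ := hconj t
      refine ⟨k, hi ?_⟩
      change i (DihedralGroup.r 1 ^ k) = _
      rw [map_zpow, hir, ← hψ, hir]
      exact hk
    obtain h | h | h | h | h := hn
    · rw [orderOf_eq_one_iff.1 h, Subgroup.zpowers_one_eq_bot] at hF hsg
      have hs2 : orderOf s = 2 := orderOf_eq_prime (by rw [pow_two, hss]) (by simpa using hsg)
      have := two s hs2 (le_antisymm (fun x hx => ?_) (by simpa using hs))
      · tauto
      · obtain h1 | h1 := hF x hx
        · rw [Subgroup.mem_bot.1 h1]
          exact one_mem _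
        · rw [← inv_eq_of_mul_eq_one_right (Subgroup.mem_bot.1 h1)]
          exact inv_mem (Subgroup.mem_zpowers s)
    · obtain ⟨ψ, ⟨k, hk⟩, he, hinn⟩ := dihedral 2 h
      have hk' : DihedralGroup.r (k : ZMod 2) = ψ (.r 1) := by
        rw [← DihedralGroup.r_one_zpow]
        exact hk
      have hψ : ψ (.r 1) = .r 1 := by
        have h2 : ∀ z : ZMod 2, z = 0 ∨ z = 1 := by decide
        obtain h0 | h0 := h2 k
        · rw [h0, DihedralGroup.r_zero, eq_comm, EmbeddingLike.map_eq_one_iff] at hk'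
          exact absurd hk' (by decide)
        · rw [← hk', h0]
      by_cases h1 : ψ = 1
      · have := hinn ⟨1, by rw [h1, map_one]⟩
        tauto
      · have : ∃ ψ : MulAut (DihedralGroup 2), orderOf ψ = 2 ∧
            Nonempty (G ≃* SdZ (DihedralGroup 2) ψ) :=
          ⟨ψ, orderOf_eq_prime (sq_eq_one_of_map_r_one ψ hψ) h1, he⟩
        simp only [this, true_or, or_true]
    · obtain ⟨ψ, -, -, hinn⟩ := dihedral 3 h
      have := hinn (isInner_mulAut_dihedralGroup_three ψ)
      tauto
    · obtain ⟨ψ, -, he, hinn⟩ := dihedral 4 h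
      by_cases hi : IsInner ψ
      · have := hinn hi
        tauto
      · have : ∃ ψ : MulAut (DihedralGroup 4), ¬ IsInner ψ ∧
            Nonempty (G ≃* SdZ (DihedralGroup 4) ψ) := ⟨ψ, hi, he⟩
        simp only [this, true_or, or_true]
    · obtain ⟨ψ, -, he, hinn⟩ := dihedral 6 h
      by_cases hi : IsInner ψ
      · have := hinn hi
        tauto
      · have : ∃ ψ : MulAut (DihedralGroup 6), ¬ IsInner ψ ∧
            Nonempty (G ≃* SdZ (DihedralGroup 6) ψ) := ⟨ψ, hi, he⟩
        simp only [this, or_true]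

end KernelStructure

section Deviation

open scoped commutatorElement

theorem eq_one_of_norm_pow_sub_one_le {R : Type*} [NormedRing R] [NormedAlgebra ℝ R]
    {c : R} {δ : ℝ} (hδ : δ < 1) (h : ∀ n : ℕ, ‖c ^ n - 1‖ ≤ δ) : c = 1 := by
  have hδ0 : 0 ≤ δ := (norm_nonneg _).trans (h 0)
  have step : ∀ x : R, ‖x - 1‖ ≤ δ → (2 - δ) * ‖x - 1‖ ≤ ‖x ^ 2 - 1‖ := by
    intro x hx
    have h1 : (2 : ℕ) • (x - 1) = (x ^ 2 - 1) - (x - 1) * (x - 1) := by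
      rw [two_nsmul]
      noncomm_ring
    have h2 : ‖(x - 1) + (x - 1)‖ = 2 * ‖x - 1‖ := by
      rw [← two_smul ℝ, norm_smul, Real.norm_ofNat]
    have h3 : ‖(x - 1) + (x - 1)‖ ≤ ‖x ^ 2 - 1‖ + ‖x - 1‖ * ‖x - 1‖ := by
      rw [← two_nsmul, h1]
      exact (norm_sub_le _ _).trans (by gcongr; exact norm_mul_le _ _)
    nlinarith [norm_nonneg (x - 1)]
  have growth : ∀ k : ℕ, (2 - δ) ^ k * ‖c - 1‖ ≤ ‖c ^ 2 ^ k - 1‖ := by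
    intro k
    induction k with
    | zero => simp
    | succ k ih =>
      calc (2 - δ) ^ (k + 1) * ‖c - 1‖ = (2 - δ) * ((2 - δ) ^ k * ‖c - 1‖) := by ring
        _ ≤ (2 - δ) * ‖c ^ 2 ^ k - 1‖ := by gcongr; linarith
        _ ≤ _ := by rw [pow_succ 2 k, pow_mul]; exact step _ (h _)
  by_contra hc
  have hpos : 0 < ‖c - 1‖ := norm_pos_iff.2 (sub_ne_zero.2 hc)
  obtain ⟨k, hk⟩ := pow_unbounded_of_one_lt (1 / ‖c - 1‖) (by linarith : 1 < 2 - δ)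
  rw [div_lt_iff₀ hpos] at hk
  linarith [growth k, h (2 ^ k)]

variable {V : Type*} [NormedAddCommGroup V] [NormedSpace ℝ V]

/-- The linear isometry group as a submonoid of the ring of bounded operators. -/
def toOp : (V ≃ₗᵢ[ℝ] V) →* (V →L[ℝ] V) where
  toFun A := (A.toContinuousLinearEquiv : V →L[ℝ] V)
  map_one' := rfl
  map_mul' _ _ := rfl

theorem toOp_apply (A : V ≃ₗᵢ[ℝ] V) (x : V) : toOp A x = A x := rfl

theorem norm_toOp_le (A : V ≃ₗᵢ[ℝ] V) : ‖toOp A‖ ≤ 1 :=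
  ContinuousLinearMap.opNorm_le_bound _ zero_le_one fun x => by
    rw [toOp_apply, A.norm_map, one_mul]

theorem toOp_mul_inv (A : V ≃ₗᵢ[ℝ] V) : toOp A * toOp A⁻¹ = 1 := by
  rw [← map_mul, mul_inv_cancel, map_one]

/-- The distance of a linear isometry from the identity in operator norm. -/
def deviation (A : V ≃ₗᵢ[ℝ] V) : ℝ := ‖toOp A - 1‖

theorem deviation_nonneg (A : V ≃ₗᵢ[ℝ] V) : 0 ≤ deviation A := norm_nonneg _

theorem norm_mul_toOp_le (x : V →L[ℝ] V) (A : V ≃ₗᵢ[ℝ] V) : ‖x * toOp A‖ ≤ ‖x‖ :=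
  (norm_mul_le _ _).trans (mul_le_of_le_one_right (norm_nonneg _) (norm_toOp_le A))

theorem norm_toOp_mul_le (x : V →L[ℝ] V) (A : V ≃ₗᵢ[ℝ] V) : ‖toOp A * x‖ ≤ ‖x‖ :=
  (norm_mul_le _ _).trans (mul_le_of_le_one_left (norm_nonneg _) (norm_toOp_le A))

theorem norm_apply_sub_le (A : V ≃ₗᵢ[ℝ] V) (x : V) : ‖A x - x‖ ≤ deviation A * ‖x‖ :=
  (toOp A - 1).le_opNorm x

theorem eq_one_of_toOp_eq_one {A : V ≃ₗᵢ[ℝ] V} (h : toOp A = 1) : A = 1 :=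
  LinearIsometryEquiv.ext fun x => DFunLike.congr_fun h x

theorem eq_one_of_deviation_eq_zero {A : V ≃ₗᵢ[ℝ] V} (h : deviation A = 0) : A = 1 :=
  eq_one_of_toOp_eq_one (sub_eq_zero.1 (norm_eq_zero.1 h))

theorem deviation_mul_inv_le (A B : V ≃ₗᵢ[ℝ] V) :
    deviation (A * B⁻¹) ≤ ‖toOp A - toOp B‖ := by
  have : toOp (A * B⁻¹) - 1 = (toOp A - toOp B) * toOp B⁻¹ := by
    rw [sub_mul, toOp_mul_inv, map_mul]
  rw [deviation, this]
  exact norm_mul_toOp_le _ _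

theorem deviation_conj_le (A B : V ≃ₗᵢ[ℝ] V) : deviation (A * B * A⁻¹) ≤ deviation B := by
  have : toOp (A * B * A⁻¹) - 1 = toOp A * (toOp B - 1) * toOp A⁻¹ := by
    rw [mul_sub, sub_mul, mul_one, toOp_mul_inv, map_mul, map_mul]
  rw [deviation, this]
  exact (norm_mul_toOp_le _ _).trans (norm_toOp_mul_le _ _)

theorem deviation_commutator_le (A B : V ≃ₗᵢ[ℝ] V) :
    deviation ⁅A, B⁆ ≤ 2 * deviation A * deviation B := by
  have : toOp ⁅A, B⁆ - 1 =
      ((toOp A - 1) * (toOp B - 1) - (toOp B - 1) * (toOp A - 1)) * toOp (B * A)⁻¹ := by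
    have h1 : (toOp A - 1) * (toOp B - 1) - (toOp B - 1) * (toOp A - 1) =
        toOp (A * B) - toOp (B * A) := by
      rw [map_mul, map_mul]
      noncomm_ring
    rw [h1, sub_mul, toOp_mul_inv, ← map_mul, commutatorElement_def, mul_inv_rev, ← mul_assoc]
  rw [deviation, this]
  refine (norm_mul_toOp_le _ _).trans ((norm_sub_le _ _).trans ?_)
  have h1 := norm_mul_le (toOp A - 1) (toOp B - 1)
  have h2 := norm_mul_le (toOp B - 1) (toOp A - 1)
  unfold deviation
  linarith

theorem eq_one_of_deviation_pow_le {A : V ≃ₗᵢ[ℝ] V} {δ : ℝ} (hδ : δ < 1)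
    (h : ∀ n : ℕ, deviation (A ^ n) ≤ δ) : A = 1 :=
  eq_one_of_toOp_eq_one (eq_one_of_norm_pow_sub_one_le hδ fun n => by
    rw [← map_pow]
    exact h n)

/-- If `A` commutes with the commutator `⁅A, B⁆` and `B` is close to the identity, then `A`
commutes with `B`. -/
theorem commutator_eq_one_of_deviation_le {A B : V ≃ₗᵢ[ℝ] V} (hB : deviation B ≤ 1 / 4)
    (h : Commute A ⁅A, B⁆) : ⁅A, B⁆ = 1 := by
  refine eq_one_of_deviation_pow_le (δ := 1 / 2) (by norm_num) fun n => ?_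
  have hn : ⁅A, B⁆ ^ n = A ^ n * B * (A ^ n)⁻¹ * B⁻¹ := by
    induction n with
    | zero => simp
    | succ n ih =>
      have h2 : ⁅A, B⁆ * B = A * B * A⁻¹ := by
        rw [commutatorElement_def]
        group
      have h3 := (h.pow_left n).pow_right 1
      rw [pow_one] at h3
      calc ⁅A, B⁆ ^ (n + 1) = ⁅A, B⁆ * ⁅A, B⁆ ^ n := pow_succ' _ _
        _ = (⁅A, B⁆ * A ^ n) * B * (A ^ n)⁻¹ * B⁻¹ := by rw [ih]; group
        _ = A ^ n * (⁅A, B⁆ * B) * (A ^ n)⁻¹ * B⁻¹ := by rw [← h3.eq]; group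
        _ = _ := by rw [h2, pow_succ]; group
  rw [hn]
  refine (deviation_mul_inv_le _ _).trans ?_
  have h1 := deviation_conj_le (A ^ n) B
  have h2 : toOp (A ^ n * B * (A ^ n)⁻¹) - toOp B =
      (toOp (A ^ n * B * (A ^ n)⁻¹) - 1) - (toOp B - 1) := by abel
  rw [h2]
  refine (norm_sub_le _ _).trans ?_
  unfold deviation at h1 hB
  linarith

theorem apply_eq_self_of_apply_apply_sub {A : V ≃ₗᵢ[ℝ] V} {w : V}
    (h : A (A w - w) = A w - w) : A w = w := by
  have hn : ∀ n : ℕ, (A ^ n) w = w + n • (A w - w) := by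
    intro n
    induction n with
    | zero => simp
    | succ n ih =>
      rw [pow_succ', LinearIsometryEquiv.coe_mul, Function.comp_apply, ih, map_add,
        map_nsmul, h, succ_nsmul]
      abel
  by_contra hne
  have hpos : 0 < ‖A w - w‖ := norm_pos_iff.2 (sub_ne_zero.2 hne)
  obtain ⟨n, hn'⟩ := exists_nat_gt (2 * ‖w‖ / ‖A w - w‖)
  rw [div_lt_iff₀ hpos] at hn'
  have h1 : n • (A w - w) = (A ^ n) w - w := by rw [hn]; abel
  have h2 := norm_sub_le ((A ^ n) w) w
  rw [← h1, (A ^ n).norm_map, ← Nat.cast_smul_eq_nsmul ℝ, norm_smul, Real.norm_natCast] at h2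
  linarith

end Deviation

section LinearPart

open scoped commutatorElement

variable {n : ℕ}

/-- The linear part of an isometry. -/
def lin : Isom n →* (E n ≃ₗᵢ[ℝ] E n) where
  toFun γ := γ.toRealLinearIsometryEquiv
  map_one' := by
    ext1 x
    rw [IsometryEquiv.toRealLinearIsometryEquiv_apply]
    exact sub_zero x
  map_mul' γ δ := by
    have h (γ : Isom n) (x y : E n) :
        γ.toRealLinearIsometryEquiv (x - y) = γ x - γ y := by
      rw [map_sub, IsometryEquiv.toRealLinearIsometryEquiv_apply,
        IsometryEquiv.toRealLinearIsometryEquiv_apply, sub_sub_sub_cancel_right]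
    ext1 x
    change _ = γ.toRealLinearIsometryEquiv (δ.toRealLinearIsometryEquiv x)
    rw [IsometryEquiv.toRealLinearIsometryEquiv_apply δ, h,
      IsometryEquiv.toRealLinearIsometryEquiv_apply]
    rfl

theorem lin_apply (γ : Isom n) (x : E n) : lin γ x = γ x - γ 0 :=
  IsometryEquiv.toRealLinearIsometryEquiv_apply γ x

theorem lin_sub (γ : Isom n) (x y : E n) : lin γ (x - y) = γ x - γ y := by
  rw [map_sub, lin_apply, lin_apply, sub_sub_sub_cancel_right]

theorem isom_apply (γ : Isom n) (x : E n) : γ x = lin γ x + γ 0 := by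
  rw [lin_apply, sub_add_cancel]

theorem isom_eq_one {γ : Isom n} (h : lin γ = 1) (h0 : γ 0 = 0) : γ = 1 := by
  ext1 x
  rw [isom_apply, h, h0, add_zero]
  rfl

theorem commutator_zero (α β : Isom n) :
    ⁅α, β⁆ 0 = (lin α (β 0) - β 0) - (lin β (α 0) - α 0) -
      (lin ⁅α, β⁆ (lin β (α 0) + β 0) - (lin β (α 0) + β 0)) := by
  have h : ⁅α, β⁆ (β (α 0)) = α (β 0) := by
    change ⁅α, β⁆ ((β * α) 0) = (α * β) 0
    rw [← IsometryEquiv.mul_apply, commutatorElement_def]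
    congr 1
    group
  rw [isom_apply ⁅α, β⁆ (β (α 0)), isom_apply α (β 0), isom_apply β (α 0)] at h
  rw [eq_sub_of_add_eq' h]
  abel

theorem commutator_zero_of_lin_eq_one (α β : Isom n) (h : lin ⁅α, β⁆ = 1) :
    ⁅α, β⁆ 0 = (lin α (β 0) - β 0) - (lin β (α 0) - α 0) := by
  rw [commutator_zero, h]
  simp

end LinearPart

section SmallRotations

open scoped commutatorElement

variable {n : ℕ} {Γ : Subgroup (Isom n)}

theorem IsCrystallographic.finite_displacement (hΓ : IsCrystallographic Γ) (R : ℝ) :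
    {γ : Isom n | γ ∈ Γ ∧ ‖γ 0‖ ≤ R}.Finite := by
  refine (hΓ.1 {0} (Metric.closedBall 0 R) isCompact_singleton
    (isCompact_closedBall 0 R)).subset ?_
  rintro γ ⟨hγ, h⟩
  exact ⟨hγ, γ 0, ⟨0, rfl, rfl⟩, by simpa using h⟩

/-- The iterated commutators `⁅α, ⁅α, … ⁅α, β⁆⁆⁆`. -/
def iteratedCommutator (α β : Isom n) : ℕ → Isom n
  | 0 => β
  | k + 1 => ⁅α, iteratedCommutator α β k⁆

theorem iteratedCommutator_mem {α β : Isom n} (hα : α ∈ Γ) (hβ : β ∈ Γ) (k : ℕ) :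
    iteratedCommutator α β k ∈ Γ := by
  induction k with
  | zero => exact hβ
  | succ k ih => exact mul_mem (mul_mem (mul_mem hα ih) (inv_mem hα)) (inv_mem ih)

theorem lin_commutator (α β : Isom n) : lin ⁅α, β⁆ = ⁅lin α, lin β⁆ :=
  map_commutatorElement lin α β

theorem deviation_iteratedCommutator_le {α β : Isom n} (hα : deviation (lin α) ≤ 1 / 4)
    (hβ : deviation (lin β) ≤ 1 / 4) (k : ℕ) :
    deviation (lin (iteratedCommutator α β k)) ≤ 1 / 4 ∧
    deviation (lin (iteratedCommutator α β (k + 1))) ≤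
      1 / 2 * deviation (lin (iteratedCommutator α β k)) := by
  have step : ∀ k, deviation (lin (iteratedCommutator α β (k + 1))) ≤
      1 / 2 * deviation (lin (iteratedCommutator α β k)) := by
    intro k
    have h1 := deviation_commutator_le (lin α) (lin (iteratedCommutator α β k))
    rw [← lin_commutator] at h1
    change deviation (lin ⁅α, iteratedCommutator α β k⁆) ≤ _
    nlinarith [deviation_nonneg (lin (iteratedCommutator α β k))]
  refine ⟨?_, step k⟩
  induction k with
  | zero => exact hβ
  | succ k ih => linarith [step k, deviation_nonneg (lin (iteratedCommutator α β k))]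

/-- A weighted size of an isometry that contracts under commutators with `α`. -/
def weight (α γ : Isom n) : ℝ := ‖γ 0‖ + (4 * ‖α 0‖ + 1) * deviation (lin γ)

theorem weight_nonneg (α γ : Isom n) : 0 ≤ weight α γ := by
  have := deviation_nonneg (lin γ)
  unfold weight
  positivity

theorem eq_one_of_weight_eq_zero {α γ : Isom n} (h : weight α γ = 0) : γ = 1 := by
  have h1 := deviation_nonneg (lin γ)
  have h2 : 0 ≤ (4 * ‖α 0‖ + 1) * deviation (lin γ) := by positivity
  unfold weight at h
  have h3 : ‖γ 0‖ = 0 := by linarith [norm_nonneg (γ 0)]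
  have h4 : (4 * ‖α 0‖ + 1) * deviation (lin γ) = 0 := by linarith
  have h5 : 4 * ‖α 0‖ + 1 ≠ 0 := by positivity
  exact isom_eq_one (eq_one_of_deviation_eq_zero ((mul_eq_zero.1 h4).resolve_left h5))
    (norm_eq_zero.1 h3)

theorem weight_commutator_le {α β : Isom n} (hα : deviation (lin α) ≤ 1 / 4)
    (hβ : deviation (lin β) ≤ 1 / 4) : weight α ⁅α, β⁆ ≤ 7 / 8 * weight α β := by
  have hc := deviation_commutator_le (lin α) (lin β)
  rw [← lin_commutator] at hc
  have hν := deviation_nonneg (lin β)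
  have ha := norm_nonneg (α 0)
  have hb := norm_nonneg (β 0)
  have hc' : deviation (lin ⁅α, β⁆) ≤ 1 / 2 * deviation (lin β) := by nlinarith
  have h1 : ‖lin α (β 0) - β 0‖ ≤ 1 / 4 * ‖β 0‖ :=
    (norm_apply_sub_le _ _).trans (by gcongr)
  have h2 : ‖lin β (α 0) - α 0‖ ≤ deviation (lin β) * ‖α 0‖ := norm_apply_sub_le _ _
  have h3 : ‖lin ⁅α, β⁆ (lin β (α 0) + β 0) - (lin β (α 0) + β 0)‖ ≤
      1 / 2 * deviation (lin β) * (‖α 0‖ + ‖β 0‖) := by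
    refine (norm_apply_sub_le _ _).trans (mul_le_mul hc' ?_ (norm_nonneg _) (by positivity))
    exact (norm_add_le _ _).trans (by rw [LinearIsometryEquiv.norm_map])
  have h4 : ‖⁅α, β⁆ 0‖ ≤ 1 / 4 * ‖β 0‖ + deviation (lin β) * ‖α 0‖ +
      1 / 2 * deviation (lin β) * (‖α 0‖ + ‖β 0‖) := by
    rw [commutator_zero]
    refine (norm_sub_le _ _).trans (add_le_add ((norm_sub_le _ _).trans (add_le_add h1 h2)) h3)
  unfold weight
  nlinarith [mul_nonneg hν ha, mul_nonneg hν hb, mul_le_mul_of_nonneg_right hβ hb,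
    mul_le_mul_of_nonneg_left hc' (by positivity : 0 ≤ 4 * ‖α 0‖ + 1)]

theorem exists_iteratedCommutator_eq_one (hΓ : IsCrystallographic Γ) {α β : Isom n} (hα : α ∈ Γ)
    (hβ : β ∈ Γ) (hα' : deviation (lin α) ≤ 1 / 4) (hβ' : deviation (lin β) ≤ 1 / 4) :
    ∃ k, iteratedCommutator α β k = 1 := by
  by_contra! hne
  have hw : ∀ k, weight α (iteratedCommutator α β k) ≤ (7 / 8) ^ k * weight α β := by
    intro k
    induction k with
    | zero => simp [iteratedCommutator]
    | succ k ih =>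
      have := weight_commutator_le hα' (deviation_iteratedCommutator_le hα' hβ' k).1
      rw [pow_succ']
      change weight α ⁅α, iteratedCommutator α β k⁆ ≤ _
      linarith
  have hlim : Filter.Tendsto (fun k => weight α (iteratedCommutator α β k)) Filter.atTop
      (nhds 0) := by
    refine squeeze_zero (fun k => weight_nonneg _ _) hw ?_
    simpa using (tendsto_pow_atTop_nhds_zero_of_lt_one (by norm_num : (0 : ℝ) ≤ 7 / 8)
      (by norm_num)).mul_const (weight α β)
  have hfin : {γ : Isom n | (γ ∈ Γ ∧ ‖γ 0‖ ≤ 1) ∧ γ ≠ 1}.Finite :=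
    (hΓ.finite_displacement 1).subset fun γ h => h.1
  have hev : ∀ᶠ k in Filter.atTop, ∀ γ ∈ {γ : Isom n | (γ ∈ Γ ∧ ‖γ 0‖ ≤ 1) ∧ γ ≠ 1},
      weight α (iteratedCommutator α β k) < weight α γ := by
    rw [Filter.eventually_all_finite hfin]
    rintro γ ⟨-, hγ⟩
    exact hlim.eventually_lt_const ((weight_nonneg α γ).lt_of_ne fun h =>
      hγ (eq_one_of_weight_eq_zero h.symm))
  obtain ⟨k, hk, hk1⟩ := (hev.and (hlim.eventually_lt_const one_pos)).exists
  refine lt_irrefl _ (hk (iteratedCommutator α β k)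
    ⟨⟨iteratedCommutator_mem hα hβ k, ?_⟩, hne k⟩)
  have h1 := deviation_nonneg (lin (iteratedCommutator α β k))
  have h2 : 0 ≤ (4 * ‖α 0‖ + 1) * deviation (lin (iteratedCommutator α β k)) := by positivity
  unfold weight at hk1
  linarith

/-- Two elements with small linear parts commute up to a translation fixed by the first. -/
theorem lin_fixes_commutator_zero (hΓ : IsCrystallographic Γ) {α β : Isom n} (hα : α ∈ Γ)
    (hβ : β ∈ Γ) (hα' : deviation (lin α) ≤ 1 / 4) (hβ' : deviation (lin β) ≤ 1 / 4) :
    lin ⁅α, β⁆ = 1 ∧ lin α (⁅α, β⁆ 0) = ⁅α, β⁆ 0 := by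
  obtain ⟨k, hk⟩ := exists_iteratedCommutator_eq_one hΓ hα hβ hα' hβ'
  have hk1 : iteratedCommutator α β (k + 1) = 1 := by
    change ⁅α, iteratedCommutator α β k⁆ = 1
    rw [hk, commutatorElement_one_right]
  have hlin : lin ⁅α, β⁆ = 1 := by
    have down : ∀ k, lin (iteratedCommutator α β (k + 1)) = 1 →
        lin (iteratedCommutator α β 1) = 1 := by
      intro k
      induction k with
      | zero => exact id
      | succ k ih =>
        intro h
        refine ih ?_
        change lin ⁅α, iteratedCommutator α β (k + 1)⁆ = 1 at h
        rw [lin_commutator, commutatorElement_eq_one_iff_commute] at h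
        change lin ⁅α, iteratedCommutator α β k⁆ = 1
        rw [lin_commutator]
        refine commutator_eq_one_of_deviation_le (deviation_iteratedCommutator_le hα' hβ' k).1 ?_
        rw [← lin_commutator]
        exact h
    exact down k (by rw [hk1, map_one])
  refine ⟨hlin, ?_⟩
  have hl : ∀ k, lin (iteratedCommutator α β (k + 1)) = 1 := by
    intro k
    induction k with
    | zero => exact hlin
    | succ k ih =>
      change lin ⁅α, iteratedCommutator α β (k + 1)⁆ = 1
      rw [lin_commutator, ih, commutatorElement_one_right]
  have hz : ∀ k, iteratedCommutator α β (k + 2) 0 =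
      lin α (iteratedCommutator α β (k + 1) 0) - iteratedCommutator α β (k + 1) 0 := by
    intro k
    have h := commutator_zero_of_lin_eq_one α (iteratedCommutator α β (k + 1)) (hl (k + 1))
    rw [hl k] at h
    refine h.trans ?_
    simp
  have down : ∀ k, lin α (iteratedCommutator α β (k + 1) 0) = iteratedCommutator α β (k + 1) 0 →
      lin α (iteratedCommutator α β 1 0) = iteratedCommutator α β 1 0 := by
    intro k
    induction k with
    | zero => exact id
    | succ k ih =>
      intro h
      rw [hz] at h
      exact ih (apply_eq_self_of_apply_apply_sub h)
  refine down k ?_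
  rw [hk1]
  exact map_zero _

theorem exists_mem_near_of_cocompact (hΓ : IsCrystallographic Γ) (u : E n) :
    ∃ C : ℝ, ∀ J : ℕ, ∃ j ≥ J, ∃ β ∈ Γ, deviation (lin β) ≤ 1 / 4 ∧ ‖β 0 - (j : ℝ) • u‖ ≤ C := by
  obtain ⟨K, hK, hcov⟩ := hΓ.2
  obtain ⟨R, hR⟩ := hK.isBounded.subset_closedBall 0
  have hnear : ∀ k : ℕ, ∃ β ∈ Γ, ‖β 0 - (k : ℝ) • u‖ ≤ R := by
    intro k
    obtain ⟨γ, hγ, hx⟩ := hcov ((k : ℝ) • u)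
    refine ⟨γ⁻¹, inv_mem hγ, ?_⟩
    have h1 := hR hx
    rw [mem_closedBall_zero_iff] at h1
    rw [← dist_eq_norm, ← γ.dist_eq, IsometryEquiv.apply_inv_self, dist_zero_left]
    exact h1
  choose β hβ hβu using hnear
  obtain ⟨L, -, φ, hφ, hL⟩ := tendsto_subseq_of_bounded (x := fun k => toOp (lin (β k)))
    (Metric.isBounded_closedBall (x := 0) (r := 1))
    fun k => mem_closedBall_zero_iff.2 (norm_toOp_le _)
  obtain ⟨N, hN⟩ := Metric.cauchySeq_iff'.1 hL.cauchySeq (1 / 4) (by norm_num)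
  refine ⟨R + ‖(β (φ N))⁻¹ 0‖, fun J => ?_⟩
  refine ⟨φ (max J N), (le_max_left J N).trans hφ.le_apply, β (φ (max J N)) * (β (φ N))⁻¹,
    mul_mem (hβ _) (inv_mem (hβ _)), ?_, ?_⟩
  · rw [map_mul, map_inv]
    refine (deviation_mul_inv_le _ _).trans ?_
    have := hN _ (le_max_right J N)
    rw [dist_eq_norm] at this
    exact this.le
  · have h1 : ‖β (φ (max J N)) ((β (φ N))⁻¹ 0) - β (φ (max J N)) 0‖ = ‖(β (φ N))⁻¹ 0‖ := by
      rw [← dist_eq_norm, IsometryEquiv.dist_eq, dist_zero_right]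
    have h2 := norm_add_le (β (φ (max J N)) ((β (φ N))⁻¹ 0) - β (φ (max J N)) 0)
      (β (φ (max J N)) 0 - (φ (max J N) : ℝ) • u)
    rw [sub_add_sub_cancel, h1] at h2
    change ‖β (φ (max J N)) ((β (φ N))⁻¹ 0) - _‖ ≤ _
    linarith [hβu (φ (max J N))]

/-- Elements of a crystallographic group whose linear part is close to the identity are
translations. -/
theorem lin_eq_one_of_deviation_le (hΓ : IsCrystallographic Γ) {α : Isom n} (hα : α ∈ Γ)
    (hα' : deviation (lin α) ≤ 1 / 4) : lin α = 1 := by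
  by_contra hne
  have hu : ∃ u : E n, lin α (lin α u - u) - (lin α u - u) ≠ 0 := by
    by_contra! h
    exact hne (LinearIsometryEquiv.ext fun u =>
      apply_eq_self_of_apply_apply_sub (sub_eq_zero.1 (h u)))
  obtain ⟨u, hu⟩ := hu
  let T : E n →ₗ[ℝ] E n := (lin α).toLinearEquiv.toLinearMap - 1
  have hT : ∀ x, T x = lin α x - x := fun _ => rfl
  have hT2 : ∀ (γ : Isom n) x, ‖lin γ x - x‖ ≤ 2 * ‖x‖ := fun γ x => by
    have := norm_sub_le (lin γ x) x
    rw [LinearIsometryEquiv.norm_map] at this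
    linarith
  rw [← hT, ← hT] at hu
  obtain ⟨C, hC⟩ := exists_mem_near_of_cocompact hΓ u
  obtain ⟨J, hJ⟩ := exists_nat_gt ((4 * ‖α 0‖ + 4 * C) / ‖T (T u)‖)
  obtain ⟨j, hj, β, hβ, hβ', hβu⟩ := hC J
  rw [div_lt_iff₀ (norm_pos_iff.2 hu)] at hJ
  obtain ⟨h1, h2⟩ := lin_fixes_commutator_zero hΓ hα hβ hα' hβ'
  rw [commutator_zero_of_lin_eq_one _ _ h1, ← sub_eq_zero, ← hT, ← hT, map_sub, sub_eq_zero] at h2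
  have h3 : ‖T (lin β (α 0) - α 0)‖ ≤ 4 * ‖α 0‖ := by
    rw [hT]
    linarith [hT2 α (lin β (α 0) - α 0), hT2 β (α 0)]
  have h4 : ‖T (T (β 0 - (j : ℝ) • u))‖ ≤ 4 * C := by
    have h5 := hT2 α (T (β 0 - (j : ℝ) • u))
    have h6 := hT2 α (β 0 - (j : ℝ) • u)
    rw [← hT] at h5 h6
    linarith
  have h7 : (j : ℝ) • T (T u) = T (T (β 0)) - T (T (β 0 - (j : ℝ) • u)) := by
    rw [← map_sub, ← map_sub, sub_sub_cancel, map_smul, map_smul]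
  have h8 := norm_sub_le (T (T (β 0))) (T (T (β 0 - (j : ℝ) • u)))
  rw [← h7, h2, norm_smul, Real.norm_natCast] at h8
  have h9 : (J : ℝ) * ‖T (T u)‖ ≤ j * ‖T (T u)‖ := by gcongr
  linarith

end SmallRotations

section TranslationLattice

variable {n : ℕ} {Γ : Subgroup (Isom n)}

/-- The additive group of translation vectors of a group of isometries. -/
def translationLattice (Γ : Subgroup (Isom n)) : AddSubgroup (E n) where
  carrier := {v | ∃ γ ∈ Γ, lin γ = 1 ∧ γ 0 = v}
  zero_mem' := ⟨1, one_mem Γ, map_one lin, rfl⟩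
  add_mem' := by
    rintro _ _ ⟨γ, hγ, h, rfl⟩ ⟨δ, hδ, h', rfl⟩
    refine ⟨γ * δ, mul_mem hγ hδ, by rw [map_mul, h, h', mul_one], ?_⟩
    change γ (δ 0) = _
    rw [isom_apply, h, add_comm]
    rfl
  neg_mem' := by
    rintro _ ⟨γ, hγ, h, rfl⟩
    refine ⟨γ⁻¹, inv_mem hγ, by rw [map_inv, h, inv_one], ?_⟩
    have h1 := isom_apply γ (γ⁻¹ 0)
    rw [IsometryEquiv.apply_inv_self, h] at h1
    exact eq_neg_of_add_eq_zero_left h1.symm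

theorem lin_mem_translationLattice {γ : Isom n} (hγ : γ ∈ Γ) {v : E n}
    (hv : v ∈ translationLattice Γ) : lin γ v ∈ translationLattice Γ := by
  obtain ⟨δ, hδ, h, rfl⟩ := hv
  refine ⟨γ * δ * γ⁻¹, mul_mem (mul_mem hγ hδ) (inv_mem hγ), ?_, ?_⟩
  · rw [map_mul, map_mul, h, mul_one, map_inv, mul_inv_cancel]
  · change γ (δ (γ⁻¹ 0)) = _
    rw [isom_apply δ, h, LinearIsometryEquiv.coe_one, id, ← sub_zero (γ (γ⁻¹ 0 + δ 0)),
      ← IsometryEquiv.apply_inv_self γ 0, ← lin_sub, IsometryEquiv.apply_inv_self,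
      add_sub_cancel_left]

theorem IsCrystallographic.finite_translationLattice (hΓ : IsCrystallographic Γ) (R : ℝ) :
    {v : E n | v ∈ translationLattice Γ ∧ ‖v‖ ≤ R}.Finite := by
  refine ((hΓ.finite_displacement R).image fun γ => γ 0).subset ?_
  rintro _ ⟨⟨γ, hγ, -, rfl⟩, h⟩
  exact ⟨γ, ⟨hγ, h⟩, rfl⟩

theorem exists_translation_inner_ne_zero (hΓ : IsCrystallographic Γ) {u : E n} (hu : u ≠ 0) :
    ∃ b ∈ translationLattice Γ, inner ℝ u b ≠ 0 := by
  obtain ⟨C, hC⟩ := exists_mem_near_of_cocompact hΓ u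
  have hpos : 0 < ‖u‖ := norm_pos_iff.2 hu
  obtain ⟨J, hJ⟩ := exists_nat_gt (C / ‖u‖)
  obtain ⟨j, hj, β, hβ, hβ', hβu⟩ := hC J
  refine ⟨β 0, ⟨β, hβ, lin_eq_one_of_deviation_le hΓ hβ hβ', rfl⟩, fun h => ?_⟩
  rw [div_lt_iff₀ hpos] at hJ
  have h1 : inner ℝ u (β 0 - (j : ℝ) • u) = -(j * ‖u‖ ^ 2) := by
    rw [inner_sub_right, h, inner_smul_right, real_inner_self_eq_norm_sq, zero_sub]
  have h2 := abs_real_inner_le_norm u (β 0 - (j : ℝ) • u)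
  rw [h1, abs_neg, abs_of_nonneg (by positivity)] at h2
  have h3 : ‖u‖ * ‖β 0 - (j : ℝ) • u‖ ≤ ‖u‖ * C := by gcongr
  have h4 : (J : ℝ) * ‖u‖ ≤ j * ‖u‖ := by gcongr
  nlinarith

/-- A real number that scales a nonzero vector of a discrete group back into the group is an
integer, provided that the vector is shortest. -/
theorem exists_int_eq_of_smul_mem {L : AddSubgroup (E n)} {w : E n} (hw : w ∈ L) (hw0 : w ≠ 0)
    (hmin : ∀ x ∈ L, x ∈ Submodule.span ℝ {w} → x ≠ 0 → ‖w‖ ≤ ‖x‖) {c : ℝ} (hc : c • w ∈ L) :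
    ∃ k : ℤ, c = k := by
  refine ⟨round c, ?_⟩
  by_contra hne
  have hmem : (c - round c) • w ∈ L := by
    rw [sub_smul, Int.cast_smul_eq_zsmul]
    exact sub_mem hc (zsmul_mem hw _)
  have h1 := hmin _ hmem (Submodule.smul_mem _ _ (Submodule.mem_span_singleton_self w))
    (smul_ne_zero (sub_ne_zero.2 hne) hw0)
  rw [norm_smul, Real.norm_eq_abs] at h1
  have h2 := abs_sub_round c
  have h3 : 0 < ‖w‖ := norm_pos_iff.2 hw0
  nlinarith

theorem circle_pow_eq_one_of_two_re_int {a : Circle} {k : ℤ} (hk : 2 * (a : ℂ).re = k) :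
    a ^ 4 = 1 ∨ a ^ 6 = 1 := by
  have hre : |(a : ℂ).re| ≤ 1 := (Complex.abs_re_le_norm _).trans_eq (Circle.norm_coe a)
  rw [abs_le] at hre
  have hlo : -2 ≤ k := by exact_mod_cast (by linarith : (-2 : ℝ) ≤ k)
  have hhi : k ≤ 2 := by exact_mod_cast (by linarith : (k : ℝ) ≤ 2)
  have hsq : (a : ℂ) ^ 2 = k * a - 1 := by
    have h1 : (a : ℂ) * (starRingEnd ℂ) a = 1 := by
      rw [Complex.mul_conj, Circle.normSq_coe, Complex.ofReal_one]
    have h2 : (a : ℂ) + (starRingEnd ℂ) a = k := by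
      rw [Complex.add_conj, hk, Complex.ofReal_intCast]
    rw [← h2, ← h1]
    ring
  have h4 : (a : ℂ) ^ 4 = 1 → a ^ 4 = 1 := fun h => Circle.coe_injective (by simpa using h)
  have h6 : (a : ℂ) ^ 6 = 1 → a ^ 6 = 1 := fun h => Circle.coe_injective (by simpa using h)
  interval_cases k <;> push_cast at hsq
  · left
    have h : ((a : ℂ) + 1) ^ 2 = 0 := by linear_combination hsq
    rw [h4]
    rw [eq_neg_of_add_eq_zero_left (pow_eq_zero_iff two_ne_zero |>.1 h)]
    norm_num
  · right
    exact h6 (by linear_combination ((a : ℂ) ^ 4 - a ^ 3 + a - 1) * hsq)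
  · left
    exact h4 (by linear_combination ((a : ℂ) ^ 2 - 1) * hsq)
  · right
    exact h6 (by linear_combination ((a : ℂ) ^ 4 + a ^ 3 - a - 1) * hsq)
  · left
    have h : ((a : ℂ) - 1) ^ 2 = 0 := by linear_combination hsq
    rw [h4]
    rw [sub_eq_zero.1 (pow_eq_zero_iff two_ne_zero |>.1 h)]
    norm_num

end TranslationLattice

section PlaneRepresentation

/-- An isometric parametrization of the plane orthogonal to a nonzero vector of `ℝ³`. -/
theorem exists_plane_parametrization {v : E 3} (hv : v ≠ 0) :
    Nonempty (ℂ ≃ₗᵢ[ℝ] (Submodule.span ℝ {v})ᗮ) := by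
  have : Fact (Module.finrank ℝ (E 3) = 2 + 1) := ⟨finrank_euclideanSpace_fin⟩
  exact ⟨Complex.orthonormalBasisOneI.repr.trans
    (OrthonormalBasis.fromOrthogonalSpanSingleton (𝕜 := ℝ) 2 hv).repr.symm⟩

variable {v : E 3} (e : ℂ ≃ₗᵢ[ℝ] (Submodule.span ℝ {v})ᗮ)

theorem exists_plane_isometry {A : E 3 ≃ₗᵢ[ℝ] E 3} (hA : A v = v) :
    ∃ B : ℂ ≃ₗᵢ[ℝ] ℂ, ∀ z, A (e z) = e (B z) := by
  have hmem : ∀ z, A (e z) ∈ (Submodule.span ℝ {v})ᗮ := by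
    intro z
    have h := (e z).2
    rw [Submodule.mem_orthogonal_singleton_iff_inner_right] at h ⊢
    rw [← h]
    nth_rw 1 [← hA]
    exact A.inner_map_map _ _
  let f : ℂ →ₗ[ℝ] ℂ := e.symm.toLinearEquiv.toLinearMap ∘ₗ LinearMap.codRestrict _
    (A.toLinearEquiv.toLinearMap ∘ₗ (Submodule.span ℝ {v})ᗮ.subtype ∘ₗ
      e.toLinearEquiv.toLinearMap) hmem
  have hf : ∀ z, f z = e.symm ⟨A (e z), hmem z⟩ := fun _ => rfl
  let F : ℂ →ₗᵢ[ℝ] ℂ := ⟨f, fun z => by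
    rw [hf, LinearIsometryEquiv.norm_map, Submodule.coe_norm, A.norm_map, ← Submodule.coe_norm,
      e.norm_map]⟩
  refine ⟨F.toLinearIsometryEquiv rfl, fun z => ?_⟩
  change _ = ((e (e.symm ⟨A (e z), hmem z⟩) : (Submodule.span ℝ {v})ᗮ) : E 3)
  rw [e.apply_symm_apply]

theorem exists_plane_representation {G : Type*} [Group G] (A : G →* (E 3 ≃ₗᵢ[ℝ] E 3))
    (hA : ∀ g, A g v = v) :
    ∃ ρ : G →* (ℂ ≃ₗᵢ[ℝ] ℂ), ∀ g z, A g (e z) = e (ρ g z) := by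
  choose ρ hρ using fun g => exists_plane_isometry e (hA g)
  have hinj : ∀ x y : ℂ, (e x : E 3) = e y → x = y := fun x y h => e.injective (Subtype.ext h)
  refine ⟨⟨⟨ρ, ?_⟩, ?_⟩, hρ⟩
  · ext1 z
    refine hinj _ _ ?_
    rw [← hρ, map_one]
    rfl
  · intro g h
    ext1 z
    refine hinj _ _ ?_
    change _ = ((e (ρ g (ρ h z)) : (Submodule.span ℝ {v})ᗮ) : E 3)
    rw [← hρ, ← hρ, ← hρ, map_mul]
    rfl

theorem eq_one_of_plane_eq_one {A : E 3 ≃ₗᵢ[ℝ] E 3} (hA : A v = v)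
    (h : ∀ z, A (e z) = e z) : A = 1 := by
  ext1 x
  obtain ⟨y, hy, z, hz, rfl⟩ := (Submodule.span ℝ {v}).exists_add_mem_mem_orthogonal x
  obtain ⟨c, rfl⟩ := Submodule.mem_span_singleton.1 hy
  have h1 := h (e.symm ⟨z, hz⟩)
  rw [e.apply_symm_apply] at h1
  rw [map_add, map_smul, hA, h1]
  rfl

/-- The crystallographic restriction for rotations about an axis. -/
theorem crystallographic_restriction {Γ : Subgroup (Isom 3)} (hΓ : IsCrystallographic Γ)
    {γ : Isom 3} (hγ : γ ∈ Γ) (hv : lin γ v = v) {a : Circle}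
    (ha : ∀ z, lin γ (e z) = e (rotation a z)) : a ^ 4 = 1 ∨ a ^ 6 = 1 := by
  by_cases ha1 : a = 1
  · left
    rw [ha1, one_pow]
  have hpre : ∀ w ∈ (Submodule.span ℝ {v})ᗮ, ∃ z : ℂ, w = e z := fun w hw =>
    ⟨e.symm ⟨w, hw⟩, by rw [e.apply_symm_apply]⟩
  have hne : ((e 1 : (Submodule.span ℝ {v})ᗮ) : E 3) ≠ 0 := by
    intro h
    exact one_ne_zero (e.map_eq_zero_iff.1 (Subtype.ext h))
  obtain ⟨b, hb, hb0⟩ := exists_translation_inner_ne_zero hΓ hne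
  have hw1 : lin γ b - b ∈ translationLattice Γ := sub_mem (lin_mem_translationLattice hγ hb) hb
  have hw1W : lin γ b - b ∈ (Submodule.span ℝ {v})ᗮ := by
    rw [Submodule.mem_orthogonal_singleton_iff_inner_right, inner_sub_right, sub_eq_zero]
    nth_rw 1 [← hv]
    exact (lin γ).inner_map_map _ _
  have hw10 : lin γ b - b ≠ 0 := by
    intro h
    obtain ⟨y, hy, z, hz, rfl⟩ := (Submodule.span ℝ {v}).exists_add_mem_mem_orthogonal b
    obtain ⟨c, rfl⟩ := Submodule.mem_span_singleton.1 hy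
    obtain ⟨z, rfl⟩ := hpre z hz
    rw [map_add, map_smul, hv, add_sub_add_left_eq_sub, ha, ← Submodule.coe_sub, ← map_sub,
      Submodule.coe_eq_zero, e.map_eq_zero_iff, rotation_apply, ← sub_one_mul, mul_eq_zero] at h
    obtain h | h := h
    · exact ha1 (Circle.coe_injective (sub_eq_zero.1 h))
    · refine hb0 ?_
      have h2 := (e 1).2
      rw [Submodule.mem_orthogonal_singleton_iff_inner_left] at h2
      rw [h, map_zero, Submodule.coe_zero, add_zero, inner_smul_right, h2, mul_zero]
  have hfin : {w : E 3 | (w ∈ translationLattice Γ ∧ ‖w‖ ≤ ‖lin γ b - b‖) ∧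
      w ∈ (Submodule.span ℝ {v})ᗮ ∧ w ≠ 0}.Finite :=
    (hΓ.finite_translationLattice _).subset fun w h => h.1
  obtain ⟨w, ⟨⟨hwL, hwle⟩, hwW, hw0⟩, hwmin⟩ := Set.exists_min_image _ (fun w => ‖w‖) hfin
    ⟨_, ⟨hw1, le_rfl⟩, hw1W, hw10⟩
  obtain ⟨z, rfl⟩ := hpre w hwW
  have hinv : lin γ⁻¹ (e z) = e (rotation a⁻¹ z) := by
    have h1 : ((e z : (Submodule.span ℝ {v})ᗮ) : E 3) = lin γ (e (rotation a⁻¹ z)) := by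
      rw [ha]
      congr 2
      rw [map_inv]
      exact ((rotation a).apply_symm_apply z).symm
    rw [map_inv, h1]
    exact (lin γ).symm_apply_apply _
  have hc : (2 * (a : ℂ).re) • ((e z : (Submodule.span ℝ {v})ᗮ) : E 3) ∈ translationLattice Γ := by
    have h1 : (2 * (a : ℂ).re) • ((e z : (Submodule.span ℝ {v})ᗮ) : E 3) =
        lin γ (e z) + lin γ⁻¹ (e z) := by
      rw [ha, hinv, ← Submodule.coe_smul, ← map_smul, ← Submodule.coe_add, ← map_add]
      congr 2
      rw [rotation_apply, rotation_apply, ← add_mul, Circle.coe_inv_eq_conj, Complex.add_conj]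
      exact Complex.real_smul
    rw [h1]
    exact add_mem (lin_mem_translationLattice hγ hwL)
      (lin_mem_translationLattice (inv_mem hγ) hwL)
  obtain ⟨k, hk⟩ := exists_int_eq_of_smul_mem hwL hw0 (fun x hx hxs hx0 => by
    by_contra! hlt
    refine absurd (hwmin x ⟨⟨hx, hlt.le.trans hwle⟩, ?_, hx0⟩) (not_le.2 hlt)
    exact (Submodule.span_singleton_le_iff_mem _ _).2 hwW hxs) hc
  exact circle_pow_eq_one_of_two_re_int hk

end PlaneRepresentation

section LineTranslations

theorem exists_translation_hom {n : ℕ} {G : Subgroup (Isom n)} {p v : E n} (hv : v ≠ 0)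
    (hinv : ∀ g ∈ G, ∀ t : ℝ, ∃ t' : ℝ, g (p + t • v) = p + t' • v)
    (htrans : ∀ g ∈ G, ∃ w : E n, ∀ t : ℝ, g (p + t • v) = p + t • v + w) :
    ∃ s : G →* Multiplicative ℝ,
      ∀ (g : G) (t : ℝ), (g : Isom n) (p + t • v) = p + (t + (s g).toAdd) • v := by
  have h : ∀ g : G, ∃ r : ℝ, ∀ t : ℝ, (g : Isom n) (p + t • v) = p + (t + r) • v := by
    intro g
    obtain ⟨w, hw⟩ := htrans g g.2
    obtain ⟨r, hr⟩ := hinv g g.2 0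
    rw [hw, zero_smul, add_zero] at hr
    refine ⟨r, fun t => ?_⟩
    rw [hw, add_left_cancel hr, add_smul, add_assoc]
  choose s hs using h
  have hinj : ∀ r r' : ℝ, p + r • v = p + r' • v → r = r' := fun r r' h =>
    smul_left_injective ℝ hv (add_left_cancel h)
  refine ⟨MonoidHom.mk' (fun g => Multiplicative.ofAdd (s g)) fun g h => ?_, hs⟩
  refine congrArg Multiplicative.ofAdd (hinj _ _ ?_)
  have h1 := hs (g * h) 0
  rw [zero_add] at h1
  rw [← h1]
  change (g : Isom n) ((h : Isom n) _) = _
  rw [hs, hs, zero_add, add_comm (s h)]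
  rfl

theorem exists_int_hom_of_discrete {G : Type*} [Group G] (s : G →* Multiplicative ℝ) {a : ℝ}
    (ha : 0 < a) (hd : ∀ g, (s g).toAdd ∉ Set.Ioo 0 a) (hne : ∃ g, s g ≠ 1) :
    ∃ τ : G →* Multiplicative ℤ, τ.ker = s.ker ∧ ∃ t, τ t = Multiplicative.ofAdd 1 := by
  obtain ⟨b, hb⟩ := AddSubgroup.cyclic_of_isolated_zero
    (H := (MonoidHom.toAdditiveLeft s).range) ha (Set.disjoint_left.2 fun _ ⟨g, hg⟩ h =>
      hd g.toMul (hg ▸ h))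
  have hmem : ∀ g, ∃ k : ℤ, k • b = (s g).toAdd := fun g =>
    AddSubgroup.mem_closure_singleton.1 (hb ▸ ⟨Additive.ofMul g, rfl⟩)
  choose τ hτ using hmem
  have hb0 : b ≠ 0 := by
    rintro rfl
    obtain ⟨g, hg⟩ := hne
    have h := hτ g
    rw [smul_zero] at h
    exact hg h.symm
  have hinj : ∀ k k' : ℤ, k • b = k' • b → k = k' := fun k k' h => smul_left_injective ℤ hb0 h
  refine ⟨MonoidHom.mk' (fun g => Multiplicative.ofAdd (τ g)) fun g h => ?_, ?_, ?_⟩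
  · refine congrArg Multiplicative.ofAdd (hinj _ _ ?_)
    change _ = (τ g + τ h) • b
    rw [add_smul, hτ, hτ, hτ, map_mul]
    rfl
  · ext g
    rw [MonoidHom.mem_ker, MonoidHom.mem_ker]
    constructor
    · intro h
      have h1 : τ g = 0 := h
      have h2 := hτ g
      rw [h1, zero_smul] at h2
      exact h2.symm
    · intro h
      have h2 := hτ g
      rw [h] at h2
      exact hinj _ 0 (h2.trans (zero_smul ℤ b).symm)
  · have hbmem : b ∈ (MonoidHom.toAdditiveLeft s).range :=
      hb ▸ AddSubgroup.mem_closure_singleton_self b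
    obtain ⟨g, hg⟩ := hbmem
    refine ⟨g.toMul, congrArg Multiplicative.ofAdd (hinj _ 1 ?_)⟩
    rw [hτ, one_smul]
    exact hg

variable {n : ℕ} {Γ G : Subgroup (Isom n)} {p v : E n} {s : G →* Multiplicative ℝ}

theorem IsCrystallographic.finite_translation_le (hΓ : IsCrystallographic Γ) (hGΓ : G ≤ Γ)
    (hs : ∀ (g : G) (t : ℝ), (g : Isom n) (p + t • v) = p + (t + (s g).toAdd) • v) (R : ℝ) :
    {g : G | |(s g).toAdd| ≤ R}.Finite := by
  refine Set.Finite.of_finite_image (f := Subtype.val) ?_ Subtype.val_injective.injOn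
  refine (hΓ.1 {p} (Metric.closedBall p (R * ‖v‖)) isCompact_singleton
    (isCompact_closedBall _ _)).subset ?_
  rintro _ ⟨g, hg, rfl⟩
  refine ⟨hGΓ g.2, _, ⟨p, rfl, rfl⟩, ?_⟩
  have h := hs g 0
  rw [zero_smul, add_zero, zero_add] at h
  rw [h, mem_closedBall_iff_norm, add_sub_cancel_left, norm_smul, Real.norm_eq_abs]
  gcongr
  exact hg

theorem exists_translation_gap (hΓ : IsCrystallographic Γ) (hGΓ : G ≤ Γ)
    (hs : ∀ (g : G) (t : ℝ), (g : Isom n) (p + t • v) = p + (t + (s g).toAdd) • v) :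
    ∃ a > 0, ∀ g, (s g).toAdd ∉ Set.Ioo 0 a := by
  have hfin : {g : G | (s g).toAdd ∈ Set.Ioo 0 1}.Finite :=
    (hΓ.finite_translation_le hGΓ hs 1).subset fun g hg => by
      rw [Set.mem_ofPred_eq, abs_of_pos hg.1]
      exact hg.2.le
  obtain h | h := Set.eq_empty_or_nonempty {g : G | (s g).toAdd ∈ Set.Ioo 0 1}
  · exact ⟨1, one_pos, Set.eq_empty_iff_forall_notMem.1 h⟩
  · obtain ⟨g₀, hg₀, hmin⟩ := Set.exists_min_image _ (fun g => (s g).toAdd) hfin h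
    exact ⟨_, hg₀.1, fun g hg => (hmin g ⟨hg.1, hg.2.trans hg₀.2⟩).not_gt hg.2⟩

theorem exists_translation_ne_one (hv : v ≠ 0)
    (hs : ∀ (g : G) (t : ℝ), (g : Isom n) (p + t • v) = p + (t + (s g).toAdd) • v)
    {K : Set (E n)} (hK : IsCompact K) (hKG : ∀ t : ℝ, ∃ g ∈ G, g (p + t • v) ∈ K) :
    ∃ g, s g ≠ 1 := by
  by_contra! h
  obtain ⟨R, hR⟩ := hK.isBounded.subset_closedBall p
  obtain ⟨t, ht⟩ := exists_nat_gt (R / ‖v‖)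
  obtain ⟨g, hg, hgK⟩ := hKG t
  have h1 := hs ⟨g, hg⟩ t
  rw [h, toAdd_one, add_zero] at h1
  change g _ = _ at h1
  have h2 := hR hgK
  rw [h1, mem_closedBall_iff_norm, add_sub_cancel_left, norm_smul, Real.norm_natCast] at h2
  rw [div_lt_iff₀ (norm_pos_iff.2 hv)] at ht
  exact h2.not_gt ht

theorem lin_apply_direction
    (hs : ∀ (g : G) (t : ℝ), (g : Isom n) (p + t • v) = p + (t + (s g).toAdd) • v) (g : G) :
    lin (g : Isom n) v = v := by
  have h0 := hs g 0
  have h1 := hs g 1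
  have h := lin_sub (g : Isom n) (p + (1 : ℝ) • v) (p + (0 : ℝ) • v)
  rw [h0, h1, add_sub_add_left_eq_sub, add_sub_add_left_eq_sub, ← sub_smul, ← sub_smul,
    add_sub_add_right_eq_sub, sub_zero, one_smul] at h
  exact h

theorem isom_eq_one_of_fixed_point {γ : Isom n} (h : lin γ = 1) (hp : γ p = p) : γ = 1 := by
  refine isom_eq_one h ?_
  have h1 := isom_apply γ p
  rw [hp, h] at h1
  exact left_eq_add.1 h1

end LineTranslations

/-- Proposition 3.3. Let `Γ` be a 3-crystallographic group and `G ≤ Γ` a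
subgroup leaving a line `l` invariant and acting on `l` cocompactly and purely by translations.
Then `G` is isomorphic to one of the fifteen listed groups, where in each semidirect product
`F ⋊_φ ℤ` the automorphism `φ` represents the nontrivial element of `Out F` (for cyclic `F`,
inversion; for `D₂`, an element of order 2 of `Out D₂ = Aut D₂`; for `D₄`, `D₆`, a non-inner
automorphism). -/
theorem translation_action_classification
    (Γ G : Subgroup (Isom 3)) (hΓ : IsCrystallographic Γ) (hGΓ : G ≤ Γ)
    (l : Set (E 3)) (hl : IsLine l)
    (hinv : ∀ g ∈ G, g '' l = l)
    (hcc : ∃ K : Set (E 3), IsCompact K ∧ K ⊆ l ∧ ∀ x ∈ l, ∃ g ∈ G, g x ∈ K)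
    (htrans : ∀ g ∈ G, ∃ v : E 3, ∀ x ∈ l, g x = x + v) :
    Nonempty (G ≃* Multiplicative ℤ) ∨
    Nonempty (G ≃* (Zc 2 × Multiplicative ℤ)) ∨
    Nonempty (G ≃* (Zc 3 × Multiplicative ℤ)) ∨
    Nonempty (G ≃* SdZ (Zc 3) (MulEquiv.inv (Zc 3))) ∨
    Nonempty (G ≃* (Zc 4 × Multiplicative ℤ)) ∨
    Nonempty (G ≃* SdZ (Zc 4) (MulEquiv.inv (Zc 4))) ∨
    Nonempty (G ≃* (Zc 6 × Multiplicative ℤ)) ∨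
    Nonempty (G ≃* SdZ (Zc 6) (MulEquiv.inv (Zc 6))) ∨
    Nonempty (G ≃* (DihedralGroup 2 × Multiplicative ℤ)) ∨
    (∃ ψ : MulAut (DihedralGroup 2), orderOf ψ = 2 ∧ Nonempty (G ≃* SdZ (DihedralGroup 2) ψ)) ∨
    Nonempty (G ≃* (DihedralGroup 3 × Multiplicative ℤ)) ∨
    Nonempty (G ≃* (DihedralGroup 4 × Multiplicative ℤ)) ∨
    (∃ ψ : MulAut (DihedralGroup 4), ¬ IsInner ψ ∧ Nonempty (G ≃* SdZ (DihedralGroup 4) ψ)) ∨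
    Nonempty (G ≃* (DihedralGroup 6 × Multiplicative ℤ)) ∨
    (∃ ψ : MulAut (DihedralGroup 6), ¬ IsInner ψ ∧ Nonempty (G ≃* SdZ (DihedralGroup 6) ψ)) := by
  obtain ⟨p, v, hv, rfl⟩ := hl
  obtain ⟨K, hK, -, hKG⟩ := hcc
  obtain ⟨s, hs⟩ := exists_translation_hom hv
    (fun g hg t => (hinv g hg).subset ⟨_, ⟨t, rfl⟩, rfl⟩)
    (fun g hg => (htrans g hg).imp fun w hw t => hw _ ⟨t, rfl⟩)
  obtain ⟨a, ha, hgap⟩ := exists_translation_gap hΓ hGΓ hs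
  obtain ⟨τ, hτ, t, ht⟩ := exists_int_hom_of_discrete s ha hgap
    (exists_translation_ne_one hv hs hK fun t => hKG _ ⟨t, rfl⟩)
  have hker : ∀ g ∈ τ.ker, (s g).toAdd = 0 := fun g hg => by
    rw [hτ] at hg
    exact hg
  have hfix : ∀ g ∈ τ.ker, (g : Isom 3) p = p := fun g hg => by
    simpa [hker g hg] using hs g 0
  have hfin : Finite τ.ker :=
    ((hΓ.finite_translation_le hGΓ hs 0).subset fun g hg => by
      rw [Set.mem_ofPred_eq, hker g hg, abs_zero]).to_subtype
  obtain ⟨e⟩ := exists_plane_parametrization hv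
  have hlin := lin_apply_direction hs
  obtain ⟨ρ, hρ⟩ := exists_plane_representation e (lin.comp G.subtype) hlin
  refine extension_classification τ t ht ρ (fun g hg h => ?_) (fun g _ h => ?_)
  · refine Subtype.ext (isom_eq_one_of_fixed_point
      (eq_one_of_plane_eq_one e (hlin g) fun z => ?_) (hfix g hg))
    have h1 := hρ g z
    rw [h] at h1
    exact h1
  · obtain ⟨c, hc⟩ := h
    rw [← hc, ← map_pow, ← map_pow]
    have hrot : ∀ z, lin (g : Isom 3) (e z) = e (rotation c z) := by
      rw [hc]
      exact hρ g
    refine (crystallographic_restriction e hΓ (hGΓ g.2) (hlin g) hrot).imp (fun h => ?_)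
      (fun h => ?_) <;> rw [h, map_one]
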